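/- Let U ⊆ ℝ be an open set, let m̃ ∈ ℝ, and let p̃ : ℝ → ℝ be three times differentiable on U and satisfy the Painlevé-II equation p̃''(y) - 2 p̃(y)³ - (2/3) y p̃(y) + (2/3) m̃ = 0 for all y ∈ U. Assume D(y) := 3 p̃'(y) + 3 p̃(y)² + y ≠ 0 for all y ∈ U. Then the function p(y) = p̃(y) - (2 m̃ - 1)/D(y) satisfies the Painlevé-II equation with parameter m = 1 - m̃, i.e. p''(y) - 2 p(y)³ - (2/3) y p(y) + (2/3)(1 - m̃) = 0 for all y ∈ U. -/

import Mathlib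

/-- Bäcklund transformation: if `p̃` solves Painlevé-II with parameter `m̃` on `U` and
`D = 3p̃' + 3p̃² + y` does not vanish on `U`, then `p = p̃ - (2m̃-1)/D` solves
Painlevé-II with parameter `1 - m̃` on `U`. -/
theorem backlund_pos (U : Set ℝ) (hU : IsOpen U) (mt : ℝ) (pt : ℝ → ℝ)
    (h1 : ∀ y ∈ U, DifferentiableAt ℝ pt y)
    (h2 : ∀ y ∈ U, DifferentiableAt ℝ (deriv pt) y)
    (h3 : ∀ y ∈ U, DifferentiableAt ℝ (deriv (deriv pt)) y)
    (hPII : ∀ y ∈ U,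
      deriv (deriv pt) y - 2 * (pt y) ^ 3 - (2 / 3) * y * pt y + (2 / 3) * mt = 0)
    (hD : ∀ y ∈ U, 3 * deriv pt y + 3 * (pt y) ^ 2 + y ≠ 0) :
    ∀ y ∈ U,
      deriv (deriv (fun t => pt t - (2 * mt - 1) / (3 * deriv pt t + 3 * (pt t) ^ 2 + t))) y -
          2 * (pt y - (2 * mt - 1) / (3 * deriv pt y + 3 * (pt y) ^ 2 + y)) ^ 3 -
          (2 / 3) * y * (pt y - (2 * mt - 1) / (3 * deriv pt y + 3 * (pt y) ^ 2 + y)) +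
          (2 / 3) * (1 - mt) = 0 := by
  intro y hy
  set D : ℝ → ℝ := fun t => 3 * deriv pt t + 3 * (pt t) ^ 2 + t with hDdef
  have hD0 : ∀ t ∈ U, D t ≠ 0 := hD
  have hDd : ∀ t ∈ U, HasDerivAt D (2 * pt t * D t - (2 * mt - 1)) t := by
    intro t ht
    have a := (h1 t ht).hasDerivAt
    have b := (h2 t ht).hasDerivAt
    have e := ((b.const_mul 3).add ((a.pow 2).const_mul 3)).add (hasDerivAt_id t)
    refine e.congr_deriv ?_
    have := hPII t ht
    simp only [hDdef]
    push_cast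
    linear_combination 3 * this
  have hq : ∀ t ∈ U, HasDerivAt (fun t => pt t - (2 * mt - 1) / D t)
      (deriv pt t + (2 * mt - 1) * (2 * pt t * D t - (2 * mt - 1)) / (D t) ^ 2) t := by
    intro t ht
    have e := (h1 t ht).hasDerivAt.sub
      ((hasDerivAt_const t (2 * mt - 1)).div (hDd t ht) (hD0 t ht))
    refine e.congr_deriv ?_
    ring
  have hev : deriv (fun t => pt t - (2 * mt - 1) / D t) =ᶠ[nhds y]
      (fun t => deriv pt t + (2 * mt - 1) * (2 * pt t * D t - (2 * mt - 1)) / (D t) ^ 2) := by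
    filter_upwards [hU.mem_nhds hy] with t ht
    exact (hq t ht).deriv
  have hd0 := hD0 y hy
  have hq2 := (h2 y hy).hasDerivAt.add
    ((((((h1 y hy).hasDerivAt.const_mul 2).mul (hDd y hy)).sub_const (2 * mt - 1)).const_mul
      (2 * mt - 1)).div ((hDd y hy).pow 2) (pow_ne_zero 2 hd0))
  have hfin := hev.deriv_eq.trans hq2.deriv
  change deriv (deriv (fun t => pt t - (2 * mt - 1) / D t)) y
    - 2 * (pt y - (2 * mt - 1) / D y) ^ 3
    - (2 / 3) * y * (pt y - (2 * mt - 1) / D y) + (2 / 3) * (1 - mt) = 0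
  rw [hfin]
  have hP := hPII y hy
  have hp' : deriv pt y = (D y - 3 * (pt y) ^ 2 - y) / 3 := by simp only [hDdef]; ring
  have hp'' : deriv (deriv pt) y = 2 * (pt y) ^ 3 + (2 / 3) * y * pt y - (2 / 3) * mt := by
    linarith
  rw [hp'', hp']
  simp only [Pi.mul_apply, Pi.pow_apply]
  generalize D y = d at *
  push_cast
  field_simp
  ring
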